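/- arXiv:0911.5148 — 3 statements merged into one kernel-verified Lean document; each statement's English description precedes it below -/
import Mathlib

section
/- For any ρ ∈ (0, 1/400) there exists α₁ ∈ (0, 1/2), depending only on ρ, such that for every α with 0 < α < α₁ the following three inequalities hold: (i) 1 < 1/(400ρ) − (1/ρ)(1 − ρ^α); (ii) ρ^{−α}(2 − ρ^α) < 500^{2α} ( 1/(400ρ) − (1/ρ)(1 − ρ^α) )^{2α}; (iii) ρ^{−α}(500^{2α} + 1 − ρ^α) < 500^{2α} ( 1/ρ − (1/ρ)(1 − ρ^α) )^{2α}. -/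
/-- If the base `B` exceeds `1 / (500 ρ)`, then `(500 B) ^ (2 α)` exceeds
`ρ ^ (-2 α)`, hence also its tangent-line bound `2 ρ ^ (-α) - 1`. -/
theorem rpow_neg_mul_two_sub_lt {ρ α B : ℝ} (hρ : 0 < ρ) (hα : 0 < α)
    (hB : 1 / (500 * ρ) < B) :
    ρ ^ (-α) * (2 - ρ ^ α) < (500 : ℝ) ^ (2 * α) * B ^ (2 * α) := by
  have hB0 : 0 < B := lt_trans (by positivity) hB
  have hinv : ρ ^ (-α) * ρ ^ α = 1 := by rw [← Real.rpow_add hρ]; simp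
  have hbase : ρ⁻¹ < 500 * B := by
    have h : ρ⁻¹ = 500 * (1 / (500 * ρ)) := by field_simp
    linarith
  have hpow : (ρ⁻¹) ^ (2 * α) < (500 * B) ^ (2 * α) :=
    Real.rpow_lt_rpow (by positivity) hbase (by positivity)
  have hsq : (ρ⁻¹) ^ (2 * α) = ρ ^ (-α) * ρ ^ (-α) := by
    rw [Real.inv_rpow hρ.le, ← Real.rpow_neg hρ.le, ← Real.rpow_add hρ]
    congr 1; ring
  rw [← Real.mul_rpow (by norm_num) hB0.le]
  nlinarith [sq_nonneg (ρ ^ (-α) - 1)]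

/-- With `x = exp (α L)` and `y = exp (2 α k)`, the difference of the two sides is at least
`(x - 1) (x y - 1) - 2 α² L x² y`, which is positive as soon as `x² y < k`. -/
theorem exp_mul_add_sub_lt {L k α : ℝ} (hL : 0 < L) (hk : 0 < k) (hα : 0 < α)
    (hsmall : Real.exp (2 * α * k + 2 * α * L) < k) :
    Real.exp (α * L) * (Real.exp (2 * α * k) + 1 - Real.exp (-(α * L))) <
      Real.exp (2 * α * k) * Real.exp (2 * α * L - 2 * α ^ 2 * L) := by
  have hx : α * L ≤ Real.exp (α * L) - 1 := by linarith [Real.add_one_le_exp (α * L)]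
  have hxy : α * L + 2 * α * k ≤ Real.exp (α * L) * Real.exp (2 * α * k) - 1 := by
    rw [← Real.exp_add]; linarith [Real.add_one_le_exp (α * L + 2 * α * k)]
  have hprod := mul_le_mul hx hxy (by positivity) (le_trans (by positivity) hx)
  have hinv : Real.exp (α * L) * Real.exp (-(α * L)) = 1 := by rw [← Real.exp_add]; simp
  have hsq : Real.exp (2 * α * k + 2 * α * L) =
      Real.exp (2 * α * k) * (Real.exp (α * L) * Real.exp (α * L)) := by
    rw [← Real.exp_add, ← Real.exp_add]; congr 1; ring
  have hrhs : Real.exp (2 * α * k + 2 * α * L) * (1 - 2 * α ^ 2 * L) ≤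
      Real.exp (2 * α * k) * Real.exp (2 * α * L - 2 * α ^ 2 * L) := by
    have h : Real.exp (2 * α * k) * Real.exp (2 * α * L - 2 * α ^ 2 * L) =
        Real.exp (2 * α * k + 2 * α * L) * Real.exp (-(2 * α ^ 2 * L)) := by
      rw [← Real.exp_add, ← Real.exp_add]; congr 1; ring
    rw [h]
    gcongr
    linarith [Real.add_one_le_exp (-(2 * α ^ 2 * L))]
  have herr : 2 * α ^ 2 * L * Real.exp (2 * α * k + 2 * α * L) < 2 * α ^ 2 * L * k := by
    gcongr
  have hpos : 0 < (α * L) * (α * L) := by positivity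
  nlinarith

/-- The third inequality, for a general constant `K` in place of `500`. -/
theorem rpow_neg_mul_add_sub_lt {ρ α K : ℝ} (hρ : 0 < ρ) (hρ1 : ρ < 1) (hK : 1 < K)
    (hα : 0 < α) (hsmall : K ^ (2 * α) * ρ ^ (-(2 * α)) < Real.log K) :
    ρ ^ (-α) * (K ^ (2 * α) + 1 - ρ ^ α) <
      K ^ (2 * α) * (1 / ρ - (1 / ρ) * (1 - ρ ^ α)) ^ (2 * α) := by
  have hK0 : 0 < K := by linarith
  have hbase : 1 / ρ - (1 / ρ) * (1 - ρ ^ α) = ρ ^ (α - 1) := by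
    rw [Real.rpow_sub hρ, Real.rpow_one]; ring
  have key := exp_mul_add_sub_lt (L := -Real.log ρ) (k := Real.log K) (α := α)
    (by linarith [Real.log_neg hρ hρ1]) (Real.log_pos hK) hα (by
      convert hsmall using 1
      rw [Real.rpow_def_of_pos hK0, Real.rpow_def_of_pos hρ, ← Real.exp_add]
      congr 1; ring)
  rw [hbase, ← Real.rpow_mul hρ.le]
  simp only [Real.rpow_def_of_pos hK0, Real.rpow_def_of_pos hρ]
  convert key using 1 <;> ring_nf

/-- the technical elementary lemma. For any `ρ ∈ (0, 1/400)` there is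
`α₁ ∈ (0, 1/2)` such that three explicit inequalities hold for all `0 < α < α₁`. -/
theorem technical_lemma (ρ : ℝ) (hρ0 : 0 < ρ) (hρ : ρ < 1 / 400) :
    ∃ α₁ : ℝ, 0 < α₁ ∧ α₁ < 1 / 2 ∧
      ∀ α : ℝ, 0 < α → α < α₁ →
        (1 < 1 / (400 * ρ) - (1 / ρ) * (1 - ρ ^ α)) ∧
        (ρ ^ (-α) * (2 - ρ ^ α) <
          (500 : ℝ) ^ (2 * α) *
            (1 / (400 * ρ) - (1 / ρ) * (1 - ρ ^ α)) ^ (2 * α)) ∧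
        (ρ ^ (-α) * ((500 : ℝ) ^ (2 * α) + 1 - ρ ^ α) <
          (500 : ℝ) ^ (2 * α) *
            (1 / ρ - (1 / ρ) * (1 - ρ ^ α)) ^ (2 * α)) := by
  have hlog : 1 < Real.log 500 := by
    rw [Real.lt_log_iff_exp_lt (by norm_num)]
    linarith [Real.exp_one_lt_d9]
  have hcont : ContinuousAt (fun α : ℝ => 1 / (400 * ρ) - (1 / ρ) * (1 - ρ ^ α)) 0 := by
    have := Real.continuousAt_const_rpow (b := 0) hρ0.ne'
    fun_prop
  have hcont' : ContinuousAt (fun α : ℝ => (500 : ℝ) ^ (2 * α) * ρ ^ (-(2 * α))) 0 := by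
    have h500 : Continuous fun α : ℝ => (500 : ℝ) ^ (2 * α) :=
      (Real.continuous_const_rpow (by norm_num)).comp (by fun_prop)
    have hpow : Continuous fun α : ℝ => ρ ^ (-(2 * α)) :=
      (Real.continuous_const_rpow hρ0.ne').comp (by fun_prop)
    exact (h500.mul hpow).continuousAt
  have hone : ∀ᶠ α : ℝ in nhds 0, 1 < 1 / (400 * ρ) - (1 / ρ) * (1 - ρ ^ α) := by
    refine hcont.eventually_const_lt ?_
    simp only [Real.rpow_zero, sub_self, mul_zero, sub_zero]
    rw [lt_div_iff₀ (by positivity)]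
    linarith
  have hbase : ∀ᶠ α : ℝ in nhds 0,
      1 / (500 * ρ) < 1 / (400 * ρ) - (1 / ρ) * (1 - ρ ^ α) := by
    refine hcont.eventually_const_lt ?_
    simp only [Real.rpow_zero, sub_self, mul_zero, sub_zero]
    gcongr
    norm_num
  have hsmall : ∀ᶠ α : ℝ in nhds 0,
      (500 : ℝ) ^ (2 * α) * ρ ^ (-(2 * α)) < Real.log 500 :=
    hcont'.eventually_lt_const (by simpa using hlog)
  obtain ⟨ε, hε, hball⟩ := Metric.eventually_nhds_iff.mp (hone.and (hbase.and hsmall))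
  refine ⟨min ε (1 / 4), by positivity, (min_le_right _ _).trans_lt (by norm_num), ?_⟩
  intro α hα hαlt
  obtain ⟨h₁, h₂, h₃⟩ := hball (y := α) (by
    rw [Real.dist_eq, sub_zero, abs_of_pos hα]
    exact hαlt.trans_le (min_le_left _ _))
  exact ⟨h₁, rpow_neg_mul_two_sub_lt hρ0 hα h₂,
    rpow_neg_mul_add_sub_lt hρ0 (by linarith) (by norm_num) hα h₃⟩
end

section
/- There exist α ∈ (0, 1/2) and constants C > 0 and c > 0 such that the following holds. Let s satisfy (1 − α)/2 < s < 1/2, let ε₁ ∈ (0, 1], and let θ be a classical solution of the regularized fractional Burgers equation with viscosity ε₁ on ℝ × [−1, 0] satisfying |θ| ≤ 1 on ℝ × [−1, 0]. Then |θ(y, 0) − θ(x, 0)| ≤ C|x − y|^α for all x, y ∈ ℝ with |x − y| > c ε₁^{2−2s}. The constants α, C, c do not depend on ε₁ or on θ. -/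
open MeasureTheory Real Set Filter

/-- The normalizing constant of the 1-D fractional Laplacian. -/
noncomputable def fracC (s : ℝ) : ℝ :=
  (4 : ℝ) ^ s * Real.Gamma (1 / 2 + s) / (Real.sqrt Real.pi * |Real.Gamma (-s)|)

/-- The fractional Laplacian `(-Δ)^s u (x)`. -/
noncomputable def fracLap (s : ℝ) (u : ℝ → ℝ) (x : ℝ) : ℝ :=
  fracC s * ∫ y : ℝ, (u x - u y) / |x - y| ^ (1 + 2 * s)

/-- A classical solution of the regularized fractional Burgers equation
`θ_t + θ θ_x + (-Δ)^s θ - ε₁ θ_xx = 0` on a set `D ⊆ ℝ × ℝ` (points written `(x, t)`):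
a bounded continuous function, continuously differentiable in `t` and twice continuously
differentiable in `x`, satisfying the equation at every point of `D`, where the fractional
Laplacian (acting in `x`) is given by an absolutely convergent integral. -/
structure IsClassicalSolution (s ε₁ : ℝ) (θ : ℝ → ℝ → ℝ) (D : Set (ℝ × ℝ)) : Prop where
  bounded : ∃ B : ℝ, ∀ p ∈ D, |θ p.1 p.2| ≤ B
  cont : ContinuousOn (fun p : ℝ × ℝ => θ p.1 p.2) D
  diff_t : ∀ p ∈ D, DifferentiableAt ℝ (fun t => θ p.1 t) p.2
  cont_dt : ContinuousOn (fun p : ℝ × ℝ => deriv (fun t => θ p.1 t) p.2) D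
  diff_x : ∀ p ∈ D, DifferentiableAt ℝ (fun x => θ x p.2) p.1
  diff_xx : ∀ p ∈ D, DifferentiableAt ℝ (deriv fun x => θ x p.2) p.1
  cont_dx : ContinuousOn (fun p : ℝ × ℝ => deriv (fun x => θ x p.2) p.1) D
  cont_dxx : ContinuousOn (fun p : ℝ × ℝ => deriv (deriv fun x => θ x p.2) p.1) D
  integrable : ∀ p ∈ D,
    Integrable fun y : ℝ => (θ p.1 p.2 - θ y p.2) / |p.1 - y| ^ (1 + 2 * s)
  eqn : ∀ p ∈ D,
    deriv (fun t => θ p.1 t) p.2 + θ p.1 p.2 * deriv (fun x => θ x p.2) p.1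
      + fracLap s (fun x => θ x p.2) p.1
      - ε₁ * deriv (deriv fun x => θ x p.2) p.1 = 0

/-- The normalizing constant is bounded below by a positive constant for `s ∈ [1/4, 1/2]`. -/
lemma exists_pos_le_fracC : ∃ c₀ : ℝ, 0 < c₀ ∧ ∀ s ∈ Icc (1 / 4 : ℝ) (1 / 2), c₀ ≤ fracC s := by
  have hneg : ∀ s ∈ Icc (1 / 4 : ℝ) (1 / 2), ∀ m : ℕ, -s ≠ -(m : ℝ) := by
    rintro s ⟨h1, h2⟩ m hm
    have hs : s = (m : ℝ) := by linarith
    rcases Nat.eq_zero_or_pos m with rfl | hpos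
    · norm_num at hs
      linarith
    · have : (1 : ℝ) ≤ m := by exact_mod_cast hpos
      linarith
  have hden : ∀ s ∈ Icc (1 / 4 : ℝ) (1 / 2), 0 < √π * |Gamma (-s)| := fun s hs =>
    mul_pos (Real.sqrt_pos.2 Real.pi_pos) (abs_pos.2 (Real.Gamma_ne_zero (hneg s hs)))
  have hcont : ContinuousOn fracC (Icc (1 / 4) (1 / 2)) := by
    intro s hs
    apply ContinuousAt.continuousWithinAt
    have hΓ₁ : ContinuousAt (fun s : ℝ => Gamma (1 / 2 + s)) s := by
      refine ContinuousAt.comp (g := Gamma) ?_ (by fun_prop)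
      refine (Real.differentiableAt_Gamma fun m hm => ?_).continuousAt
      have : (0 : ℝ) ≤ m := m.cast_nonneg
      linarith [hs.1]
    have hΓ₂ : ContinuousAt (fun s : ℝ => Gamma (-s)) s :=
      ContinuousAt.comp (g := Gamma) (Real.differentiableAt_Gamma (hneg s hs)).continuousAt
        (by fun_prop)
    have h4 : ContinuousAt (fun s : ℝ => (4 : ℝ) ^ s) s :=
      (Real.continuous_const_rpow (by norm_num)).continuousAt
    exact (h4.mul hΓ₁).div (continuousAt_const.mul hΓ₂.abs) (hden s hs).ne'
  obtain ⟨s₀, hs₀, hmin⟩ := isCompact_Icc.exists_isMinOn (nonempty_Icc.2 (by norm_num)) hcont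
  refine ⟨fracC s₀, div_pos (mul_pos (by positivity) ?_) (hden s₀ hs₀), fun s hs => hmin hs⟩
  exact Real.Gamma_pos_of_pos (by linarith [hs₀.1])

/-- The logarithm is integrable against the kernel of the fractional Laplacian. -/
lemma integrable_log_one_add_abs_div_rpow {s : ℝ} (hs₀ : 0 < s) (hs : s < 1 / 2) :
    Integrable fun h : ℝ => log (1 + |h|) / |h| ^ (1 + 2 * s) := by
  have hmeas : Measurable fun h : ℝ => log (1 + |h|) / |h| ^ (1 + 2 * s) := by fun_prop
  have key : IntegrableOn (fun h : ℝ => log (1 + |h|) / |h| ^ (1 + 2 * s)) (Ioi 0) := by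
    rw [← Ioc_union_Ioi_eq_Ioi zero_le_one]
    refine IntegrableOn.union ?_ ?_
    · have hint : IntegrableOn (fun h : ℝ => h ^ (-(2 * s))) (Ioc 0 1) :=
        (intervalIntegrable_iff_integrableOn_Ioc_of_le zero_le_one).1
          (intervalIntegral.intervalIntegrable_rpow' (by linarith))
      refine hint.mono' hmeas.aestronglyMeasurable ?_
      filter_upwards [ae_restrict_mem measurableSet_Ioc] with h hh
      have h0 : 0 < h := hh.1
      have hlog0 : 0 ≤ log (1 + h) := Real.log_nonneg (by linarith)
      have hlog : log (1 + h) ≤ h := by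
        linarith [Real.log_le_sub_one_of_pos (show 0 < 1 + h by linarith)]
      rw [abs_of_pos h0, Real.norm_of_nonneg (by positivity), div_le_iff₀ (by positivity),
        ← Real.rpow_add h0]
      simpa using hlog
    · have hint : IntegrableOn (fun h : ℝ => 2 ^ s / s * h ^ (-(1 + s))) (Ioi 1) :=
        (integrableOn_Ioi_rpow_of_lt (by linarith) zero_lt_one).const_mul _
      refine hint.mono' hmeas.aestronglyMeasurable ?_
      filter_upwards [ae_restrict_mem measurableSet_Ioi] with h hh
      have h1 : 1 < h := hh
      have h0 : 0 < h := by linarith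
      have hlog0 : 0 ≤ log (1 + h) := Real.log_nonneg (by linarith)
      rw [abs_of_pos h0, Real.norm_of_nonneg (by positivity), div_le_iff₀ (by positivity),
        mul_assoc, ← Real.rpow_add h0, show -(1 + s) + (1 + 2 * s) = s by ring]
      calc log (1 + h) ≤ (1 + h) ^ s / s := Real.log_le_rpow_div (by linarith) hs₀
        _ ≤ (2 * h) ^ s / s := by gcongr; linarith
        _ = 2 ^ s / s * h ^ s := by rw [Real.mul_rpow (by norm_num) h0.le]; ring
  have key' : IntegrableOn (fun h : ℝ => log (1 + |h|) / |h| ^ (1 + 2 * s)) (Iic 0) := by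
    rw [← Measure.map_neg_eq_self (volume : Measure ℝ)]
    have hneg : MeasurableEmbedding fun x : ℝ => -x := (Homeomorph.neg ℝ).measurableEmbedding
    rw [hneg.integrableOn_map_iff]
    simp_rw [Function.comp_def, abs_neg, neg_preimage, neg_Iic, neg_zero]
    exact Iff.mpr integrableOn_Ici_iff_integrableOn_Ioi key
  rw [← integrableOn_univ, ← Iic_union_Ioi (a := (0 : ℝ))]
  exact key'.union key

/-- A lower bound for the singular integral of a nonnegative function whose values at points
`ξ` apart have sum at least `m`. -/
lemma le_integral_div_rpow_of_pos {s m ξ : ℝ} {F : ℝ → ℝ} (hs : 0 < s) (hs' : s < 1 / 2)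
    (hξ : 0 < ξ) (hm : 0 ≤ m) (hF : Continuous F) (hF₀ : ∀ h, 0 ≤ F h)
    (hFm : ∀ h, m ≤ F h + F (h + ξ))
    (hint : Integrable fun h : ℝ => F h / |h| ^ (1 + 2 * s)) :
    ξ ^ (-(2 * s)) * m / 4 ≤ ∫ h : ℝ, F h / |h| ^ (1 + 2 * s) := by
  have hsum : ξ * m ≤ ∫ h in (0 : ℝ)..(2 * ξ), F h := by
    have hshift : ∫ h in ξ..(2 * ξ), F h = ∫ h in (0 : ℝ)..ξ, F (h + ξ) := by
      rw [intervalIntegral.integral_comp_add_right]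
      congr 1 <;> ring
    have hF' : Continuous fun h => F (h + ξ) := by fun_prop
    rw [← intervalIntegral.integral_add_adjacent_intervals (hF.intervalIntegrable 0 ξ)
      (hF.intervalIntegrable ξ (2 * ξ)), hshift,
      ← intervalIntegral.integral_add (hF.intervalIntegrable _ _) (hF'.intervalIntegrable _ _)]
    calc ξ * m = ∫ _ in (0 : ℝ)..ξ, m := by simp
      _ ≤ _ := intervalIntegral.integral_mono_on hξ.le (by simp)
        ((hF.add hF').intervalIntegrable _ _) fun h _ => hFm h
  have hpow : (2 * ξ) ^ (1 + 2 * s) ≤ 4 * ξ * ξ ^ (2 * s) := by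
    rw [Real.mul_rpow (by norm_num) hξ.le, Real.rpow_add hξ, Real.rpow_one, mul_assoc]
    gcongr
    calc (2 : ℝ) ^ (1 + 2 * s) ≤ 2 ^ (2 : ℝ) :=
          Real.rpow_le_rpow_of_exponent_le (by norm_num) (by linarith)
      _ = 4 := by norm_num
  have hle : (∫ h in (0 : ℝ)..(2 * ξ), F h) / (2 * ξ) ^ (1 + 2 * s) ≤
      ∫ h : ℝ, F h / |h| ^ (1 + 2 * s) := by
    rw [intervalIntegral.integral_of_le (by linarith), ← integral_div]
    refine le_trans ?_ (setIntegral_le_integral (s := Ioc 0 (2 * ξ)) hint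
      (Eventually.of_forall fun h => div_nonneg (hF₀ h) (by positivity)))
    refine setIntegral_mono_on (((hF.integrableOn_Ioc).div_const _)) hint.integrableOn
      measurableSet_Ioc fun h hh => ?_
    have h0 : 0 < h := hh.1
    rw [abs_of_pos h0]
    exact div_le_div_of_nonneg_left (hF₀ h) (by positivity)
      (Real.rpow_le_rpow h0.le hh.2 (by linarith))
  refine le_trans ?_ hle
  rw [le_div_iff₀ (by positivity)]
  calc ξ ^ (-(2 * s)) * m / 4 * (2 * ξ) ^ (1 + 2 * s)
      ≤ ξ ^ (-(2 * s)) * m / 4 * (4 * ξ * ξ ^ (2 * s)) := by gcongr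
    _ = ξ ^ (-(2 * s)) * ξ ^ (2 * s) * (ξ * m) := by ring
    _ = ξ * m := by rw [← Real.rpow_add hξ]; simp
    _ ≤ _ := hsum

/-- Version of `le_integral_div_rpow_of_pos` for shifts of either sign. -/
lemma le_integral_div_rpow {s m ξ : ℝ} {F : ℝ → ℝ} (hs : 0 < s) (hs' : s < 1 / 2)
    (hξ : ξ ≠ 0) (hm : 0 ≤ m) (hF : Continuous F) (hF₀ : ∀ h, 0 ≤ F h)
    (hFm : ∀ h, m ≤ F h + F (h + ξ))
    (hint : Integrable fun h : ℝ => F h / |h| ^ (1 + 2 * s)) :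
    |ξ| ^ (-(2 * s)) * m / 4 ≤ ∫ h : ℝ, F h / |h| ^ (1 + 2 * s) := by
  rcases hξ.lt_or_gt with h | h
  · have hint' : Integrable fun h : ℝ => F (-h) / |h| ^ (1 + 2 * s) := by
      simpa using hint.comp_neg
    have heq : ∫ h : ℝ, F (-h) / |h| ^ (1 + 2 * s) = ∫ h : ℝ, F h / |h| ^ (1 + 2 * s) := by
      simpa using integral_neg_eq_self (fun h : ℝ => F h / |h| ^ (1 + 2 * s)) volume
    rw [abs_of_neg h, ← heq]
    refine le_integral_div_rpow_of_pos hs hs' (neg_pos.2 h) hm (by fun_prop)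
      (fun h => hF₀ _) (fun h => ?_) hint'
    simpa [add_comm] using hFm (-h)
  · rw [abs_of_pos h]
    exact le_integral_div_rpow_of_pos hs hs' h hm hF hF₀ hFm hint

lemma log_one_add_sq_sub_le (x h : ℝ) :
    log (1 + (x + h) ^ 2) - log (1 + x ^ 2) ≤ 2 * log (1 + |h|) := by
  have hx : 0 < 1 + x ^ 2 := by positivity
  have hh : 0 < 1 + |h| := by positivity
  have hle : 1 + (x + h) ^ 2 ≤ (1 + x ^ 2) * (1 + |h|) ^ 2 := by
    have hxh : x * h ≤ |x| * |h| := by rw [← abs_mul]; exact le_abs_self _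
    have h1 : 0 ≤ (1 - |x|) ^ 2 * |h| := by positivity
    have h2 : 0 ≤ x ^ 2 * |h| ^ 2 := by positivity
    have h3 : 0 ≤ x ^ 2 * |h| := by positivity
    have h4 := abs_nonneg h
    nlinarith [sq_abs x, sq_abs h]
  have := Real.log_le_log (by positivity) hle
  rw [Real.log_mul hx.ne' (by positivity), Real.log_pow] at this
  push_cast at this
  linarith

/-- Lower bound for the difference of the singular integrals at a maximum point `(x, y)` of
`u a - u b - C |a - b| ^ α - δ log (1 + a ^ 2)`. -/
lemma le_integral_sub_integral {s α C δ x y : ℝ} {u : ℝ → ℝ} (hs : 0 < s) (hs' : s < 1 / 2)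
    (hα : α ≤ 1 / 2) (hδ : 0 ≤ δ) (hC : 0 ≤ C) (hu : Continuous u) (hxy : x ≠ y)
    (hix : Integrable fun z : ℝ => (u x - u z) / |x - z| ^ (1 + 2 * s))
    (hiy : Integrable fun z : ℝ => (u y - u z) / |y - z| ^ (1 + 2 * s))
    (hω : C * |x - y| ^ α ≤ u x - u y)
    (hmax : ∀ a b, u a - u b - C * |a - b| ^ α - δ * log (1 + a ^ 2) ≤
      u x - u y - C * |x - y| ^ α - δ * log (1 + x ^ 2)) :
    |x - y| ^ (-(2 * s)) * (u x - u y) / 8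
        - 2 * δ * ∫ h : ℝ, log (1 + |h|) / |h| ^ (1 + 2 * s) ≤
      (∫ z : ℝ, (u x - u z) / |x - z| ^ (1 + 2 * s))
        - ∫ z : ℝ, (u y - u z) / |y - z| ^ (1 + 2 * s) := by
  have hω₀ : 0 ≤ C * |x - y| ^ α := by positivity
  have hix' : Integrable fun h : ℝ => (u x - u (x + h)) / |h| ^ (1 + 2 * s) := by
    simpa using hix.comp_add_left x
  have hiy' : Integrable fun h : ℝ => (u y - u (y + h)) / |h| ^ (1 + 2 * s) := by
    simpa using hiy.comp_add_left y
  have hex : ∫ z : ℝ, (u x - u z) / |x - z| ^ (1 + 2 * s) =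
      ∫ h : ℝ, (u x - u (x + h)) / |h| ^ (1 + 2 * s) := by
    rw [← integral_add_left_eq_self _ x]; simp
  have hey : ∫ z : ℝ, (u y - u z) / |y - z| ^ (1 + 2 * s) =
      ∫ h : ℝ, (u y - u (y + h)) / |h| ^ (1 + 2 * s) := by
    rw [← integral_add_left_eq_self _ y]; simp
  have hlog := (integrable_log_one_add_abs_div_rpow hs hs').const_mul (2 * δ)
  set F : ℝ → ℝ := fun h =>
    (u x - u (x + h)) - (u y - u (y + h)) + 2 * δ * log (1 + |h|) with hF
  have hsplit : (fun h : ℝ => F h / |h| ^ (1 + 2 * s)) = fun h =>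
      (u x - u (x + h)) / |h| ^ (1 + 2 * s) - (u y - u (y + h)) / |h| ^ (1 + 2 * s)
        + 2 * δ * (log (1 + |h|) / |h| ^ (1 + 2 * s)) := by
    funext h
    simp only [hF]
    ring
  have hsub : Integrable fun h : ℝ =>
      (u x - u (x + h)) / |h| ^ (1 + 2 * s) - (u y - u (y + h)) / |h| ^ (1 + 2 * s) :=
    hix'.sub hiy'
  have hFint : Integrable fun h : ℝ => F h / |h| ^ (1 + 2 * s) := by
    rw [hsplit]
    exact hsub.add hlog
  have hFval : ∫ h : ℝ, F h / |h| ^ (1 + 2 * s) =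
      (∫ h : ℝ, (u x - u (x + h)) / |h| ^ (1 + 2 * s))
        - (∫ h : ℝ, (u y - u (y + h)) / |h| ^ (1 + 2 * s))
        + 2 * δ * ∫ h : ℝ, log (1 + |h|) / |h| ^ (1 + 2 * s) := by
    rw [hsplit, integral_add hsub hlog, integral_sub hix' hiy', integral_const_mul]
  have hpen : ∀ h, δ * log (1 + (x + h) ^ 2) - δ * log (1 + x ^ 2) ≤ 2 * δ * log (1 + |h|) := by
    intro h
    linarith [mul_le_mul_of_nonneg_left (log_one_add_sq_sub_le x h) hδ]
  have hlog₀ : ∀ h : ℝ, 0 ≤ 2 * δ * log (1 + |h|) := fun h =>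
    mul_nonneg (by linarith) (Real.log_nonneg (by linarith [abs_nonneg h]))
  have hFcont : Continuous F := by
    have : Continuous fun h : ℝ => log (1 + |h|) :=
      Continuous.log (by fun_prop) fun h => by positivity
    simp only [hF]
    fun_prop
  have hF₀ : ∀ h, 0 ≤ F h := by
    intro h
    have := hmax (x + h) (y + h)
    rw [add_sub_add_right_eq_sub] at this
    simp only [hF]
    linarith [hpen h]
  have hdouble : C * |2 * (x - y)| ^ α ≤ 3 / 2 * (C * |x - y| ^ α) := by
    rw [abs_mul, Real.mul_rpow (by positivity) (by positivity), abs_of_pos (by norm_num)]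
    have h2 : (2 : ℝ) ^ α ≤ 3 / 2 := by
      calc (2 : ℝ) ^ α ≤ 2 ^ (1 / 2 : ℝ) :=
            Real.rpow_le_rpow_of_exponent_le (by norm_num) hα
        _ = √2 := (Real.sqrt_eq_rpow 2).symm
        _ ≤ 3 / 2 := by rw [Real.sqrt_le_left (by norm_num)]; norm_num
    nlinarith
  have hFm : ∀ h, (u x - u y) / 2 ≤ F h + F (h + (x - y)) := by
    intro h
    have h1 := hmax (x + (h + (x - y))) (y + h)
    rw [show x + (h + (x - y)) - (y + h) = 2 * (x - y) by ring] at h1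
    have h2 := hpen (h + (x - y))
    have h3 : u (y + (h + (x - y))) = u (x + h) := by congr 1; ring
    simp only [hF, h3]
    linarith [hlog₀ h]
  have := le_integral_div_rpow hs hs' (sub_ne_zero.2 hxy) (by linarith) hFcont hF₀ hFm hFint
  rw [hex, hey]
  rw [hFval] at this
  linarith

lemma deriv_deriv_nonpos_of_isLocalMax {f : ℝ → ℝ} {x : ℝ} (h : IsLocalMax f x)
    (hc : ContinuousAt f x) : deriv (deriv f) x ≤ 0 := by
  by_contra! hpos
  have hmin := isLocalMin_of_deriv_deriv_pos hpos h.deriv_eq_zero hc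
  have hconst : f =ᶠ[nhds x] fun _ => f x := by
    filter_upwards [h, hmin] with z h1 h2 using le_antisymm h1 h2
  have := hconst.deriv.deriv_eq
  simp at this
  linarith

lemma exists_hasDerivAt_abs_rpow {ξ : ℝ} (hξ : ξ ≠ 0) {α : ℝ} (hα : 0 < α) :
    ∃ d, HasDerivAt (fun z : ℝ => |z| ^ α) d ξ ∧ |d| = α * |ξ| ^ (α - 1) := by
  refine ⟨_, (hasDerivAt_abs hξ).rpow_const (Or.inl (abs_ne_zero.2 hξ)), ?_⟩
  rw [abs_mul, abs_mul, abs_of_pos hα, abs_of_nonneg (by positivity : 0 ≤ |ξ| ^ (α - 1))]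
  rcases hξ.lt_or_gt with h | h <;> simp [h]

lemma hasDerivAt_log_one_add_sq (x : ℝ) :
    HasDerivAt (fun z : ℝ => log (1 + z ^ 2)) (2 * x / (1 + x ^ 2)) x := by
  have := ((hasDerivAt_pow 2 x).const_add 1).log (by positivity)
  simpa using this

lemma abs_two_mul_div_one_add_sq_le (x : ℝ) : |2 * x / (1 + x ^ 2)| ≤ 1 := by
  rw [abs_div, abs_of_pos (by positivity : 0 < 1 + x ^ 2), div_le_one (by positivity), abs_mul,
    abs_two]
  nlinarith [sq_nonneg (1 - |x|), sq_abs x]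

lemma exists_hasDerivAt_two_mul_div_one_add_sq (x : ℝ) :
    ∃ d ≤ 2, HasDerivAt (fun z : ℝ => 2 * z / (1 + z ^ 2)) d x := by
  have hx : 0 < 1 + x ^ 2 := by positivity
  refine ⟨_, ?_, ((hasDerivAt_id x).const_mul 2).div ((hasDerivAt_pow 2 x).const_add 1) hx.ne'⟩
  rw [div_le_iff₀ (by positivity)]
  simp only [id]
  push_cast
  nlinarith [sq_nonneg x, sq_nonneg (x ^ 2)]

/-- At a maximum over `[-1, 0]` away from the left endpoint, the derivative is nonnegative. -/
lemma deriv_nonneg_of_isMaxOn_Icc {k : ℝ → ℝ} {k' t : ℝ} (ht : t ∈ Icc (-1 : ℝ) 0) (ht' : -1 < t)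
    (hk : HasDerivAt k k' t) (hmax : IsMaxOn k (Icc (-1) 0) t) : 0 ≤ k' := by
  have hcone : (-1 : ℝ) - t ∈ posTangentConeAt (Icc (-1 : ℝ) 0) t :=
    sub_mem_posTangentConeAt_of_segment_subset <|
      (convex_Icc _ _).segment_subset ht (by norm_num)
  have := hmax.localize.hasFDerivWithinAt_nonpos hk.hasDerivWithinAt.hasFDerivWithinAt hcone
  simp at this
  nlinarith

/-- First-order conditions at a maximum point `(x, y)` of
`u a - u b - C |a - b| ^ α - δ log (1 + a ^ 2)`, in terms of the Burgers nonlinearity. -/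
lemma neg_le_burgers_sub {α C δ x y : ℝ} {u : ℝ → ℝ} (hα : 0 < α) (hδ : 0 ≤ δ) (hC : 0 ≤ C)
    (hu : Differentiable ℝ u) (hxy : x ≠ y) (hux : |u x| ≤ 1) (hΘ : 0 ≤ u x - u y)
    (hmax : ∀ a b, u a - u b - C * |a - b| ^ α - δ * log (1 + a ^ 2) ≤
      u x - u y - C * |x - y| ^ α - δ * log (1 + x ^ 2)) :
    -((u x - u y) * (α * C * |x - y| ^ (α - 1))) - δ ≤ u x * deriv u x - u y * deriv u y := by
  obtain ⟨d, hd, hd_abs⟩ := exists_hasDerivAt_abs_rpow (sub_ne_zero.2 hxy) hα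
  have hx : deriv u x - C * d - δ * (2 * x / (1 + x ^ 2)) = 0 := by
    have hloc : IsLocalMax (fun a => u a - C * |a - y| ^ α - δ * log (1 + a ^ 2)) x :=
      Eventually.of_forall fun a => by linarith [hmax a y]
    have hda : HasDerivAt (fun a : ℝ => |a - y| ^ α) d x := HasDerivAt.comp_sub_const x y hd
    exact hloc.hasDerivAt_eq_zero
      (((hu x).hasDerivAt.sub (hda.const_mul C)).sub ((hasDerivAt_log_one_add_sq x).const_mul δ))
  have hy : -deriv u y - C * -d = 0 := by
    have hloc : IsLocalMax (fun b => -u b - C * |x - b| ^ α) y :=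
      Eventually.of_forall fun b => by linarith [hmax x b]
    have hdb : HasDerivAt (fun b : ℝ => |x - b| ^ α) (-d) y := HasDerivAt.comp_const_sub x y hd
    exact hloc.hasDerivAt_eq_zero ((hu y).hasDerivAt.neg.sub (hdb.const_mul C))
  have hdx : deriv u x = C * d + δ * (2 * x / (1 + x ^ 2)) := by linarith
  have hdy : deriv u y = C * d := by linarith
  have h1 : -(α * |x - y| ^ (α - 1)) ≤ d := hd_abs ▸ neg_abs_le d
  have h2 : -1 ≤ u x * (2 * x / (1 + x ^ 2)) := by
    refine (abs_le.1 ?_).1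
    rw [abs_mul]
    exact mul_le_one₀ hux (abs_nonneg _) (abs_two_mul_div_one_add_sq_le x)
  rw [hdx, hdy]
  have h3 := mul_le_mul_of_nonneg_left h1 (mul_nonneg hΘ hC)
  have h4 := mul_le_mul_of_nonneg_left h2 hδ
  linarith

/-- Second-order condition, along common translations of both points, at a maximum point `(x, y)`
of `u a - u b - C |a - b| ^ α - δ log (1 + a ^ 2)`. -/
lemma deriv_deriv_sub_le {α C δ x y : ℝ} {u : ℝ → ℝ} (hδ : 0 ≤ δ)
    (hu : Differentiable ℝ u) (hu' : Differentiable ℝ (deriv u))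
    (hmax : ∀ a b, u a - u b - C * |a - b| ^ α - δ * log (1 + a ^ 2) ≤
      u x - u y - C * |x - y| ^ α - δ * log (1 + x ^ 2)) :
    deriv (deriv u) x - deriv (deriv u) y ≤ 2 * δ := by
  set g : ℝ → ℝ := fun h => u (x + h) - u (y + h) - δ * log (1 + (x + h) ^ 2) with hg
  have hloc : IsLocalMax g 0 := Eventually.of_forall fun h => by
    have := hmax (x + h) (y + h)
    rw [add_sub_add_right_eq_sub] at this
    simp only [hg, add_zero]
    linarith
  have hg' : ∀ h, HasDerivAt g (deriv u (x + h) - deriv u (y + h)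
      - δ * (2 * (x + h) / (1 + (x + h) ^ 2))) h := fun h =>
    ((HasDerivAt.comp_const_add x h (hu (x + h)).hasDerivAt).sub
      (HasDerivAt.comp_const_add y h (hu (y + h)).hasDerivAt)).sub
      ((HasDerivAt.comp_const_add x h (hasDerivAt_log_one_add_sq (x + h))).const_mul δ)
  obtain ⟨d, hd, hderiv⟩ := exists_hasDerivAt_two_mul_div_one_add_sq x
  have hxx : HasDerivAt (fun h => deriv u (x + h)) (deriv (deriv u) x) 0 :=
    HasDerivAt.comp_const_add x 0 (by simpa using (hu' x).hasDerivAt)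
  have hyy : HasDerivAt (fun h => deriv u (y + h)) (deriv (deriv u) y) 0 :=
    HasDerivAt.comp_const_add y 0 (by simpa using (hu' y).hasDerivAt)
  have hpp : HasDerivAt (fun h => 2 * (x + h) / (1 + (x + h) ^ 2)) d 0 :=
    HasDerivAt.comp_const_add x 0 (f := fun z : ℝ => 2 * z / (1 + z ^ 2)) (by simpa using hderiv)
  have hg'' : deriv (deriv g) 0 = deriv (deriv u) x - deriv (deriv u) y - δ * d := by
    rw [funext fun h => (hg' h).deriv]
    exact ((hxx.sub hyy).sub (hpp.const_mul δ)).deriv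
  have := deriv_deriv_nonpos_of_isLocalMax hloc (hg' 0).continuousAt
  nlinarith

/-- The penalized difference of a solution attains its maximum if it is positive somewhere. -/
lemma exists_max_penalized {α C δ x₁ y₁ : ℝ} {θ : ℝ → ℝ → ℝ} (hα : 0 < α) (hC : 2 ≤ C)
    (hδ : 0 < δ)
    (hcont : ContinuousOn (fun p : ℝ × ℝ => θ p.1 p.2) (univ ×ˢ Icc (-1 : ℝ) 0))
    (hbd : ∀ x : ℝ, ∀ t ∈ Icc (-1 : ℝ) 0, |θ x t| ≤ 1)
    (hpos : 0 < θ x₁ 0 - θ y₁ 0 - C * |x₁ - y₁| ^ α - δ * log (1 + x₁ ^ 2)) :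
    ∃ x y : ℝ, ∃ t ∈ Icc (-1 : ℝ) 0,
      0 < θ x t - θ y t - C * |x - y| ^ α - δ * log (1 + x ^ 2) + 2 * t ∧
      ∀ a b : ℝ, ∀ r ∈ Icc (-1 : ℝ) 0,
        θ a r - θ b r - C * |a - b| ^ α - δ * log (1 + a ^ 2) + 2 * r ≤
          θ x t - θ y t - C * |x - y| ^ α - δ * log (1 + x ^ 2) + 2 * t := by
  set Φ : ℝ × ℝ × ℝ → ℝ := fun p =>
    θ p.1 p.2.2 - θ p.2.1 p.2.2 - C * |p.1 - p.2.1| ^ α - δ * log (1 + p.1 ^ 2) + 2 * p.2.2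
    with hΦ
  set R : ℝ := exp (1 / δ) with hR
  set K : Set (ℝ × ℝ × ℝ) := Icc (-R) R ×ˢ Icc (-(R + 1)) (R + 1) ×ˢ Icc (-1) 0
  have hout : ∀ a b : ℝ, ∀ r ∈ Icc (-1 : ℝ) 0, 0 < Φ (a, b, r) → (a, b, r) ∈ K := by
    intro a b r hr hp
    simp only [hΦ] at hp
    have ha := abs_le.1 (hbd a r hr)
    have hb := abs_le.1 (hbd b r hr)
    have hlog : 0 ≤ δ * log (1 + a ^ 2) :=
      mul_nonneg hδ.le (Real.log_nonneg (by nlinarith [sq_nonneg a]))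
    have hrp : 0 ≤ C * |a - b| ^ α := by positivity
    have hab : |a - b| < 1 := by
      by_contra! hge
      have : 1 ≤ |a - b| ^ α := Real.one_le_rpow hge hα.le
      nlinarith [hr.2]
    have haR : |a| ≤ R := by
      by_contra! hlt
      have h0 : 0 < R := Real.exp_pos _
      have h1 : log (R ^ 2) ≤ log (1 + a ^ 2) := by
        apply Real.log_le_log (by positivity)
        nlinarith [sq_abs a]
      rw [Real.log_pow, hR, Real.log_exp] at h1
      push_cast at h1
      have h2 := mul_le_mul_of_nonneg_left h1 hδ.le
      have h3 : δ * (2 * (1 / δ)) = 2 := by field_simp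
      linarith [hr.2]
    have ha' := abs_le.1 haR
    have hab' := abs_lt.1 hab
    exact ⟨ha', ⟨by linarith, by linarith⟩, hr⟩
  have hpos' : 0 < Φ (x₁, y₁, 0) := by simpa [hΦ] using hpos
  have hmem : (x₁, y₁, (0 : ℝ)) ∈ K := hout _ _ _ (by norm_num) hpos'
  have hΦc : ContinuousOn Φ K := by
    have h1 : ContinuousOn (fun p : ℝ × ℝ × ℝ => θ p.1 p.2.2) K :=
      hcont.comp (f := fun p : ℝ × ℝ × ℝ => (p.1, p.2.2)) (by fun_prop)
        fun p hp => ⟨mem_univ _, hp.2.2⟩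
    have h2 : ContinuousOn (fun p : ℝ × ℝ × ℝ => θ p.2.1 p.2.2) K :=
      hcont.comp (f := fun p : ℝ × ℝ × ℝ => (p.2.1, p.2.2)) (by fun_prop)
        fun p hp => ⟨mem_univ _, hp.2.2⟩
    have h3 : Continuous fun p : ℝ × ℝ × ℝ => |p.1 - p.2.1| ^ α :=
      Continuous.rpow_const (by fun_prop) fun _ => Or.inr hα.le
    have h4 : Continuous fun p : ℝ × ℝ × ℝ => log (1 + p.1 ^ 2) :=
      Continuous.log (by fun_prop) fun p => by positivity
    exact (((h1.sub h2).sub (h3.const_mul C).continuousOn).sub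
      (h4.const_mul δ).continuousOn).add (by fun_prop)
  obtain ⟨⟨x, y, t⟩, hp, hmax⟩ :=
    (isCompact_Icc.prod (isCompact_Icc.prod isCompact_Icc)).exists_isMaxOn ⟨_, hmem⟩ hΦc
  have hpt : 0 < Φ (x, y, t) := hpos'.trans_le (hmax hmem)
  refine ⟨x, y, t, hp.2.2, hpt, fun a b r hr => ?_⟩
  by_cases h : 0 < Φ (a, b, r)
  · exact hmax (hout a b r hr h)
  · exact (not_lt.1 h).trans hpt.le

/-- One-sided Hölder bound at time `0`, at all scales. -/
lemma sub_le_mul_abs_rpow {s ε c₀ α C : ℝ} {θ : ℝ → ℝ → ℝ} (hα : 0 < α) (hα' : α ≤ 1 / 4)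
    (hC : 2 ≤ C) (hc₀ : 0 < c₀) (hcC : 48 ≤ c₀ * C) (hαC : 16 * (α * C) ≤ c₀)
    (hs : (1 - α) / 2 < s) (hs' : s < 1 / 2) (hfrac : c₀ ≤ fracC s) (hε : 0 < ε)
    (hθ : IsClassicalSolution s ε θ (univ ×ˢ Icc (-1 : ℝ) 0))
    (hbd : ∀ x : ℝ, ∀ t ∈ Icc (-1 : ℝ) 0, |θ x t| ≤ 1) (x₁ y₁ : ℝ) :
    θ x₁ 0 - θ y₁ 0 ≤ C * |x₁ - y₁| ^ α := by
  by_contra! hlt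
  have hs₀ : 0 < s := by linarith
  set I : ℝ := ∫ h : ℝ, log (1 + |h|) / |h| ^ (1 + 2 * s)
  have hfrac₀ : 0 < fracC s := hc₀.trans_le hfrac
  -- choice of the penalization parameter
  obtain ⟨δ, hδ, hδ₁, hδ₂⟩ : ∃ δ : ℝ, 0 < δ ∧
      δ * log (1 + x₁ ^ 2) < θ x₁ 0 - θ y₁ 0 - C * |x₁ - y₁| ^ α ∧
      δ * (1 + 2 * fracC s * I + 2 * ε) < 1 := by
    have h1 : Tendsto (fun δ : ℝ => δ * log (1 + x₁ ^ 2)) (nhdsWithin 0 (Ioi 0)) (nhds 0) :=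
      tendsto_nhdsWithin_of_tendsto_nhds <| by
        simpa using (continuous_mul_const (log (1 + x₁ ^ 2))).tendsto 0
    have h2 : Tendsto (fun δ : ℝ => δ * (1 + 2 * fracC s * I + 2 * ε))
        (nhdsWithin 0 (Ioi 0)) (nhds 0) :=
      tendsto_nhdsWithin_of_tendsto_nhds <| by
        simpa using (continuous_mul_const (1 + 2 * fracC s * I + 2 * ε)).tendsto 0
    obtain ⟨δ, h3, h4, h5⟩ := ((h1.eventually_lt_const (sub_pos.2 hlt)).and
      ((h2.eventually_lt_const one_pos).and self_mem_nhdsWithin)).exists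
    exact ⟨δ, h5, h3, h4⟩
  obtain ⟨x, y, t, ht, hpos, hmax⟩ :=
    exists_max_penalized (x₁ := x₁) (y₁ := y₁) hα hC hδ hθ.cont hbd (by linarith)
  have hmem : ∀ z : ℝ, (z, t) ∈ univ ×ˢ Icc (-1 : ℝ) 0 := fun _ => ⟨mem_univ _, ht⟩
  set u : ℝ → ℝ := fun z => θ z t with hu
  have hlog : 0 ≤ δ * log (1 + x ^ 2) :=
    mul_nonneg hδ.le (Real.log_nonneg (by nlinarith [sq_nonneg x]))
  have hω : C * |x - y| ^ α ≤ u x - u y := by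
    simp only [hu]
    linarith [ht.2]
  have hΘ₂ : u x - u y ≤ 2 := by
    linarith [(abs_le.1 (hbd x t ht)).2, (abs_le.1 (hbd y t ht)).1]
  have hxy : x ≠ y := by
    rintro rfl
    simp [Real.zero_rpow hα.ne'] at hpos
    linarith [ht.2]
  have hξ : 0 < |x - y| := abs_pos.2 (sub_ne_zero.2 hxy)
  have hΘ : 0 ≤ u x - u y := le_trans (by positivity) hω
  have hξ₁ : |x - y| ≤ 1 := by
    by_contra! hge
    have := Real.one_lt_rpow hge hα
    nlinarith
  have ht₁ : -1 < t := by
    refine lt_of_le_of_ne ht.1 fun h => ?_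
    have : 0 ≤ C * |x - y| ^ α := by positivity
    simp only [hu] at hΘ₂
    linarith
  have humax : ∀ a b, u a - u b - C * |a - b| ^ α - δ * log (1 + a ^ 2) ≤
      u x - u y - C * |x - y| ^ α - δ * log (1 + x ^ 2) := fun a b => by
    linarith [hmax a b t ht]
  have hud : Differentiable ℝ u := fun z => hθ.diff_x _ (hmem z)
  have hud' : Differentiable ℝ (deriv u) := fun z => hθ.diff_xx _ (hmem z)
  -- the four ingredients: time derivative, transport, viscosity, nonlocal diffusion
  have htime : 0 ≤ deriv (fun r => θ x r) t - deriv (fun r => θ y r) t + 2 := by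
    refine deriv_nonneg_of_isMaxOn_Icc (k := fun r => θ x r - θ y r + 2 * r) ht ht₁ ?_
      fun r hr => ?_
    · have h2 : HasDerivAt (fun r : ℝ => 2 * r) 2 t := by
        simpa using (hasDerivAt_id t).const_mul 2
      exact ((hθ.diff_t _ (hmem x)).hasDerivAt.sub (hθ.diff_t _ (hmem y)).hasDerivAt).add h2
    · have := hmax x y r hr
      change θ x r - θ y r + 2 * r ≤ θ x t - θ y t + 2 * t
      linarith
  have htransport := neg_le_burgers_sub hα hδ.le (by linarith) hud hxy (hbd x t ht) hΘ humax
  have hvisc := mul_le_mul_of_nonneg_left (deriv_deriv_sub_le hδ.le hud hud' humax) hε.le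
  have hdiff := mul_le_mul_of_nonneg_left (le_integral_sub_integral hs₀ hs' (by linarith) hδ.le
    (by linarith) hud.continuous hxy (hθ.integrable _ (hmem x)) (hθ.integrable _ (hmem y)) hω
    humax) hfrac₀.le
  have hex := hθ.eqn _ (hmem x)
  have hey := hθ.eqn _ (hmem y)
  simp only [fracLap] at hex hey
  set q : ℝ := |x - y| ^ (-(2 * s)) * (u x - u y) with hq
  have hCq : C ≤ q := by
    have h1 : 1 ≤ |x - y| ^ (-(2 * s)) * |x - y| ^ α := by
      rw [← Real.rpow_add hξ]
      exact Real.one_le_rpow_of_pos_of_le_one_of_nonpos hξ hξ₁ (by linarith)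
    calc C ≤ C * (|x - y| ^ (-(2 * s)) * |x - y| ^ α) := le_mul_of_one_le_right (by linarith) h1
      _ = |x - y| ^ (-(2 * s)) * (C * |x - y| ^ α) := by ring
      _ ≤ q := by rw [hq]; gcongr
  have hq₀ : 0 ≤ q := by linarith
  have hadv : (u x - u y) * (α * C * |x - y| ^ (α - 1)) ≤ c₀ / 16 * q := by
    have h1 : |x - y| ^ (α - 1) ≤ |x - y| ^ (-(2 * s)) :=
      Real.rpow_le_rpow_of_exponent_ge hξ hξ₁ (by linarith)
    calc (u x - u y) * (α * C * |x - y| ^ (α - 1))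
        ≤ (u x - u y) * (α * C * |x - y| ^ (-(2 * s))) := by gcongr
      _ = α * C * q := by rw [hq]; ring
      _ ≤ c₀ / 16 * q := by gcongr; linarith
  have hfq : c₀ * q ≤ fracC s * q := by gcongr
  have hcq : 48 ≤ c₀ * q := hcC.trans (by gcongr)
  linarith

/-- Hölder continuity at time `0`, down to scale `c ε₁^{2-2s}`, uniformly in
the viscosity `ε₁`, for solutions of the regularized equation bounded by `1`. -/
theorem holder_estimate_viscosity :
    ∃ α C c : ℝ, 0 < α ∧ α < 1 / 2 ∧ 0 < C ∧ 0 < c ∧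
      ∀ s : ℝ, (1 - α) / 2 < s → s < 1 / 2 →
        ∀ ε₁ : ℝ, 0 < ε₁ → ε₁ ≤ 1 →
          ∀ θ : ℝ → ℝ → ℝ,
            IsClassicalSolution s ε₁ θ (Set.univ ×ˢ Set.Icc (-1 : ℝ) 0) →
            (∀ x : ℝ, ∀ t ∈ Set.Icc (-1 : ℝ) 0, |θ x t| ≤ 1) →
            ∀ x y : ℝ, c * ε₁ ^ (2 - 2 * s) < |x - y| →
              |θ y 0 - θ x 0| ≤ C * |x - y| ^ α := by
  obtain ⟨c₀, hc₀, hfrac⟩ := exists_pos_le_fracC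
  set C : ℝ := max 2 (48 / c₀)
  have hC : 2 ≤ C := le_max_left _ _
  have hcC : 48 ≤ c₀ * C := by
    rw [mul_comm, ← div_le_iff₀ hc₀]
    exact le_max_right _ _
  set α : ℝ := min (1 / 4) (c₀ / (16 * C))
  have hα : 0 < α := lt_min (by norm_num) (by positivity)
  have hα' : α ≤ 1 / 4 := min_le_left _ _
  have hαC : 16 * (α * C) ≤ c₀ := by
    have : α * (16 * C) ≤ c₀ := (le_div_iff₀ (by positivity)).1 (min_le_right _ _)
    linarith
  refine ⟨α, C, 1, hα, by linarith, by linarith, one_pos, ?_⟩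
  intro s hs hs' ε hε _ θ hθ hbd x y _
  have key := sub_le_mul_abs_rpow hα hα' hC hc₀ hcC hαC hs hs'
    (hfrac s ⟨by linarith, hs'.le⟩) hε hθ hbd
  have hyx := key y x
  rw [abs_sub_comm] at hyx
  exact abs_sub_le_iff.2 ⟨hyx, key x y⟩
end

section
/- Let s ∈ (0, 1/2], ε₁ > 0, p > 0, T > 0, and let θ be a classical solution of the regularized fractional Burgers equation with viscosity ε₁ on ℝ × (0, T]. Define F(x,t) = t^{1/p} θ(x,t). Suppose F attains its supremum over ℝ × (0, T] at a point (x₀, t₀) with t₀ ∈ (0, T] and F(x₀, t₀) > 0. Then C_s ∫_ℝ (F(x₀, t₀) − F(y, t₀)) / |x₀ − y|^{1+2s} dy ≤ F(x₀, t₀) / (p t₀). -/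
open MeasureTheory Real Set Filter

/-- The second derivative is nonpositive at a local maximum. -/
theorem IsLocalMax.deriv_deriv_nonpos {f : ℝ → ℝ} {a : ℝ} (h : IsLocalMax f a)
    (hf : ContinuousAt f a) : deriv (deriv f) a ≤ 0 := by
  by_contra! hpos
  have hmin : IsLocalMin f a := isLocalMin_of_deriv_deriv_pos hpos h.deriv_eq_zero hf
  have hconst : f =ᶠ[nhds a] fun _ => f a := by
    filter_upwards [h, hmin] with x hx hx' using le_antisymm hx hx'
  have hzero : deriv (deriv f) a = 0 := by
    rw [hconst.deriv.deriv_eq]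
    simp
  exact hpos.ne' hzero

/-- The derivative is nonnegative at a maximum from the left. -/
theorem HasDerivAt.nonneg_of_eventually_le_left {f : ℝ → ℝ} {f' a : ℝ} (hf : HasDerivAt f f' a)
    (h : ∀ᶠ t in nhdsWithin a (Iio a), f t ≤ f a) : 0 ≤ f' := by
  have hslope := (hasDerivAt_iff_tendsto_slope.1 hf).mono_left
    (nhdsWithin_mono a (show Iio a ⊆ {a}ᶜ from fun _ ht => ne_of_lt ht))
  refine ge_of_tendsto hslope ?_
  filter_upwards [h, self_mem_nhdsWithin] with t ht hta
  rw [slope_def_field]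
  exact div_nonneg_of_nonpos (sub_nonpos.2 ht) (sub_nonpos.2 (le_of_lt hta))

/-- at a positive maximum of `F(x,t) = t^{1/p} θ(x,t)` over `ℝ × (0,T]`,
the fractional Laplacian of `F(·,t₀)` at `x₀` is at most `F(x₀,t₀)/(p t₀)`. -/
theorem fracLap_bound_at_max (s ε₁ p T : ℝ) (θ : ℝ → ℝ → ℝ)
    (hs : 0 < s) (hs' : s ≤ 1 / 2) (hε₁ : 0 < ε₁) (hp : 0 < p) (hT : 0 < T)
    (hsol : IsClassicalSolution s ε₁ θ {q : ℝ × ℝ | 0 < q.2 ∧ q.2 ≤ T})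
    (x₀ t₀ : ℝ) (ht₀ : 0 < t₀) (ht₀T : t₀ ≤ T)
    (hmax : ∀ x t : ℝ, 0 < t → t ≤ T →
      t ^ (1 / p) * θ x t ≤ t₀ ^ (1 / p) * θ x₀ t₀)
    (hpos : 0 < t₀ ^ (1 / p) * θ x₀ t₀) :
    fracC s * ∫ y : ℝ,
        (t₀ ^ (1 / p) * θ x₀ t₀ - t₀ ^ (1 / p) * θ y t₀) / |x₀ - y| ^ (1 + 2 * s)
      ≤ (t₀ ^ (1 / p) * θ x₀ t₀) / (p * t₀) := by
  have hmem : ((x₀, t₀) : ℝ × ℝ) ∈ {q : ℝ × ℝ | 0 < q.2 ∧ q.2 ≤ T} := ⟨ht₀, ht₀T⟩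
  have hA : 0 < t₀ ^ (1 / p) := rpow_pos_of_pos ht₀ _
  have hlocmax : IsLocalMax (fun x => θ x t₀) x₀ :=
    Eventually.of_forall fun x => le_of_mul_le_mul_left (hmax x t₀ ht₀ ht₀T) hA
  have hdx : deriv (fun x => θ x t₀) x₀ = 0 := hlocmax.deriv_eq_zero
  have hdxx : deriv (deriv fun x => θ x t₀) x₀ ≤ 0 :=
    hlocmax.deriv_deriv_nonpos (hsol.diff_x _ hmem).continuousAt
  have hdF := (hasDerivAt_rpow_const (p := 1 / p) (Or.inl ht₀.ne')).mul
    (hsol.diff_t _ hmem).hasDerivAt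
  have hdt := hdF.nonneg_of_eventually_le_left <| by
    filter_upwards [Ioo_mem_nhdsLT ht₀] with t ht
    exact hmax x₀ t ht.1 (ht.2.le.trans ht₀T)
  have heqn := hsol.eqn _ hmem
  simp only [hdx, mul_zero, add_zero] at heqn hdt
  have hint : fracC s * ∫ y : ℝ,
      (t₀ ^ (1 / p) * θ x₀ t₀ - t₀ ^ (1 / p) * θ y t₀) / |x₀ - y| ^ (1 + 2 * s)
      = t₀ ^ (1 / p) * fracLap s (fun x => θ x t₀) x₀ := by
    simp only [fracLap, ← mul_sub, mul_div_assoc, integral_const_mul]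
    ring
  have hrate : 1 / p * t₀ ^ (1 / p - 1) * θ x₀ t₀ = t₀ ^ (1 / p) * θ x₀ t₀ / (p * t₀) := by
    rw [rpow_sub_one ht₀.ne']
    field_simp
  rw [hint, ← hrate]
  have hvisc : t₀ ^ (1 / p) * (ε₁ * deriv (deriv fun x => θ x t₀) x₀) ≤ 0 :=
    mul_nonpos_of_nonneg_of_nonpos hA.le (mul_nonpos_of_nonneg_of_nonpos hε₁.le hdxx)
  linear_combination hdt + hvisc + t₀ ^ (1 / p) * heqn
end
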